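/- Let A > 0 and let q₀ : ℝ → ℂ be measurable with ∫_{−∞}^0 |q₀(y)| dy < ∞ and ∫_0^∞ |q₀(y) − A| dy < ∞. Then for every real k ≠ 0 there exists a unique pair of bounded continuous functions ψ₁, ψ₃ : ℝ → ℂ satisfying, for all x ∈ ℝ, the Volterra integral equations ψ₁(x) = 1 + ∫_{−∞}^x q₀(y) ψ₃(y) dy and ψ₃(x) = A/(2ik) + ∫_{−∞}^x e^{2ik(x−y)} (A − conj(q₀(−y))) ψ₁(y) dy + (A/(2ik)) ∫_{−∞}^x q₀(y) (1 − e^{2ik(x−y)}) ψ₃(y) dy. -/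

import Mathlib

open Complex MeasureTheory
open Set Filter Topology

/-- The primitive from `-∞` of a function integrable on left half-lines is continuous. -/
theorem continuous_integral_Iic {E : Type*} [NormedAddCommGroup E] [NormedSpace ℝ E]
    {f : ℝ → E} (hf : ∀ x, IntegrableOn f (Iic x)) : Continuous fun x => ∫ y in Iic x, f y := by
  have h : (fun x => ∫ y in Iic x, f y) =
      fun x => (∫ y in Iic (0 : ℝ), f y) + ∫ y in (0 : ℝ)..x, f y := by
    funext x
    rw [← intervalIntegral.integral_Iic_sub_Iic (hf 0) (hf x)]
    abel
  rw [h]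
  refine continuous_const.add (intervalIntegral.continuous_primitive (fun a b => ?_) 0)
  rw [intervalIntegrable_iff]
  exact (hf (max a b)).mono_set fun y hy => hy.2

/-- The exponential weight `exp (2 ∫_{-∞}^x w)` used in Gronwall and Picard arguments. -/
noncomputable def expWeight (w : ℝ → ℝ) (x : ℝ) : ℝ := Real.exp (2 * ∫ y in Iic x, w y)

theorem expWeight_pos (w : ℝ → ℝ) (x : ℝ) : 0 < expWeight w x := Real.exp_pos _

section Weight

variable {w : ℝ → ℝ}

theorem one_le_expWeight
    (hw0 : ∀ y, 0 ≤ w y) (x : ℝ) : 1 ≤ expWeight w x :=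
  Real.one_le_exp (mul_nonneg zero_le_two (integral_nonneg hw0))

theorem continuous_expWeight
    (hw : ∀ x, IntegrableOn w (Iic x)) : Continuous (expWeight w) :=
  Real.continuous_exp.comp (continuous_const.mul (continuous_integral_Iic hw))

theorem monotone_expWeight
    (hw0 : ∀ y, 0 ≤ w y) (hw : ∀ x, IntegrableOn w (Iic x)) : Monotone (expWeight w) := by
  intro a b hab
  refine Real.exp_le_exp.2 (mul_le_mul_of_nonneg_left ?_ zero_le_two)
  exact setIntegral_mono_set (hw b) (ae_of_all _ hw0) (Iic_subset_Iic.2 hab).eventuallyLE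

theorem expWeight_le (hw0 : ∀ y, 0 ≤ w y) (hwi : Integrable w) (x : ℝ) :
    expWeight w x ≤ Real.exp (2 * ∫ y, w y) :=
  Real.exp_le_exp.2 (mul_le_mul_of_nonneg_left
    (setIntegral_le_integral hwi (ae_of_all _ hw0)) zero_le_two)

/-- A continuous function bounded on left half-lines is integrable against `w` there. -/
theorem integrableOn_Iic_mul_of_bound
    (hw : ∀ x, IntegrableOn w (Iic x)) {f : ℝ → ℝ} (hf : Continuous f)
    (hb : ∀ X, ∃ B, ∀ x ≤ X, |f x| ≤ B) (x : ℝ) : IntegrableOn (fun y => w y * f y) (Iic x) := by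
  obtain ⟨B, hB⟩ := hb x
  refine Integrable.mul_bdd (c := B) (hw x) hf.aestronglyMeasurable ?_
  filter_upwards [ae_restrict_mem measurableSet_Iic] with y hy using hB y hy

theorem expWeight_bound
    (hw0 : ∀ y, 0 ≤ w y) (hw : ∀ x, IntegrableOn w (Iic x)) (X : ℝ) :
    ∃ B, ∀ x ≤ X, |expWeight w x| ≤ B :=
  ⟨expWeight w X, fun x hx => by
    rw [abs_of_pos (expWeight_pos w x)]; exact monotone_expWeight hw0 hw hx⟩

theorem integral_mul_expWeight_le
    (hw0 : ∀ y, 0 ≤ w y) (hw : ∀ x, IntegrableOn w (Iic x)) (x : ℝ) :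
    ∫ y in Iic x, w y * expWeight w y ≤ expWeight w x / 2 := by
  have hint := integrableOn_Iic_mul_of_bound hw (continuous_expWeight hw)
    (expWeight_bound hw0 hw) x
  refine le_of_tendsto (intervalIntegral_tendsto_integral_Iic x hint tendsto_id) ?_
  filter_upwards [eventually_le_atBot x] with a ha
  simp only [id]
  have hmono := monotone_expWeight hw0 hw
  have hI : IntervalIntegrable w volume a x := by
    rw [intervalIntegrable_iff_integrableOn_Ioc_of_le ha]
    exact (hw x).mono_set Ioc_subset_Iic_self
  have hd : ∫ y in a..x, w y * expWeight w y = ∫ y in a..x, deriv (expWeight w) y / 2 := by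
    refine intervalIntegral.integral_congr_ae ?_
    filter_upwards [hI.ae_hasDerivAt_integral] with y hy hmem
    have h1 := hy (uIoc_subset_uIcc hmem) a left_mem_uIcc
    have h2 : HasDerivAt (fun x => ∫ t in Iic x, w t) (w y) y := by
      refine (h1.const_add (∫ t in Iic a, w t)).congr_of_eventuallyEq (Eventually.of_forall ?_)
      intro z
      simp only
      rw [← intervalIntegral.integral_Iic_sub_Iic (hw a) (hw z)]
      ring
    have h3 : HasDerivAt (expWeight w) (expWeight w y * (2 * w y)) y := (h2.const_mul 2).exp
    rw [h3.deriv]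
    ring
  rw [hd, intervalIntegral.integral_div]
  have h := (hmono.monotoneOn (uIcc a x)).intervalIntegral_deriv_mem_uIcc
  rw [uIcc_of_le (sub_nonneg.2 (hmono ha))] at h
  have := expWeight_pos w a
  have := h.2
  linarith

/-- Gronwall's inequality on the line with a weight integrable on left half-lines. -/
theorem le_expWeight_of_le_add_integral
    (hw0 : ∀ y, 0 ≤ w y) (hw : ∀ x, IntegrableOn w (Iic x)) {N : ℝ → ℝ} {C : ℝ} (hN : Continuous N)
    (hN0 : ∀ x, 0 ≤ N x) (hC : 0 ≤ C) (hb : ∀ X, ∃ B, ∀ x ≤ X, |N x| ≤ B)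
    (h : ∀ x, N x ≤ C + ∫ y in Iic x, w y * N y) (x : ℝ) : N x ≤ 2 * C * expWeight w x := by
  set S : Set ℝ := (fun y => N y / expWeight w y) '' Iic x with hS
  have hne : S.Nonempty := ⟨_, mem_image_of_mem _ self_mem_Iic⟩
  have hbdd : BddAbove S := by
    obtain ⟨B, hB⟩ := hb x
    refine ⟨B, ?_⟩
    rintro _ ⟨y, hy, rfl⟩
    exact (div_le_self (hN0 y) (one_le_expWeight hw0 y)).trans ((le_abs_self _).trans (hB y hy))
  have hle : ∀ y ≤ x, N y ≤ sSup S * expWeight w y := fun y hy =>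
    (div_le_iff₀ (expWeight_pos w y)).1 (le_csSup hbdd (mem_image_of_mem _ hy))
  have hS0 : 0 ≤ sSup S :=
    (div_nonneg (hN0 x) (expWeight_pos w x).le).trans
      (le_csSup hbdd (mem_image_of_mem _ self_mem_Iic))
  have hsup : sSup S ≤ C + sSup S / 2 := by
    refine csSup_le hne ?_
    rintro _ ⟨y, hy, rfl⟩
    have hpos := expWeight_pos w y
    have h1 := one_le_expWeight hw0 y
    refine (div_le_iff₀ hpos).2 ?_
    have h2 : ∫ t in Iic y, w t * N t ≤ ∫ t in Iic y, sSup S * (w t * expWeight w t) := by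
      refine setIntegral_mono_on (integrableOn_Iic_mul_of_bound hw hN hb y)
        ((integrableOn_Iic_mul_of_bound hw (continuous_expWeight hw)
          (expWeight_bound hw0 hw) y).const_mul _) measurableSet_Iic fun t ht => ?_
      have := mul_le_mul_of_nonneg_left (hle t (le_trans ht hy)) (hw0 t)
      linarith
    rw [integral_const_mul] at h2
    have h3 := mul_le_mul_of_nonneg_left (integral_mul_expWeight_le hw0 hw y) hS0
    have := h y
    nlinarith
  have := hle x le_rfl
  have hpos := expWeight_pos w x
  nlinarith

end Weight

section Picard

variable {E : Type*} [NormedAddCommGroup E] {w : ℝ → ℝ} {K : ℝ → E → E}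

theorem integrableOn_Iic_comp_of_lipschitz (hw : ∀ x, IntegrableOn w (Iic x))
    (hK0 : ∀ y, K y 0 = 0) (hKL : ∀ y a b, ‖K y a - K y b‖ ≤ w y * ‖a - b‖)
    (hKm : ∀ Y : ℝ → E, Continuous Y → AEStronglyMeasurable (fun y => K y (Y y)))
    {Y : ℝ → E} (hY : Continuous Y) (hb : ∀ X, ∃ B, ∀ x ≤ X, ‖Y x‖ ≤ B) (x : ℝ) :
    IntegrableOn (fun y => K y (Y y)) (Iic x) := by
  refine Integrable.mono' (integrableOn_Iic_mul_of_bound hw hY.norm (by simpa using hb) x)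
    (hKm Y hY).restrict (ae_of_all _ fun y => ?_)
  simpa [hK0] using hKL y (Y y) 0

/-- Picard's theorem for Volterra equations on the line with a Lipschitz kernel whose Lipschitz
constant is integrable on left half-lines. -/
theorem exists_eq_add_integral_Iic [NormedSpace ℝ E] [CompleteSpace E]
    (hw0 : ∀ y, 0 ≤ w y) (hw : ∀ x, IntegrableOn w (Iic x))
    (hK0 : ∀ y, K y 0 = 0) (hKL : ∀ y a b, ‖K y a - K y b‖ ≤ w y * ‖a - b‖)
    (hKm : ∀ Y : ℝ → E, Continuous Y → AEStronglyMeasurable (fun y => K y (Y y))) (Y₀ : E) :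
    ∃ Y : ℝ → E, Continuous Y ∧ (∀ X, ∃ B, ∀ x ≤ X, ‖Y x‖ ≤ B) ∧
      ∀ x, Y x = Y₀ + ∫ y in Iic x, K y (Y y) := by
  set ρ := expWeight w with hρ
  have hρc : Continuous ρ := continuous_expWeight hw
  have hρ0 : ∀ x, 0 < ρ x := expWeight_pos w
  have hρ1 : ∀ x, 1 ≤ ρ x := one_le_expWeight hw0
  have hρm : Monotone ρ := monotone_expWeight hw0 hw
  have hscale (g : BoundedContinuousFunction ℝ E) : Continuous fun y => ρ y • g y :=
    hρc.smul g.continuous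
  have hscaleb (g : BoundedContinuousFunction ℝ E) :
      ∀ X, ∃ B, ∀ x ≤ X, ‖ρ x • g x‖ ≤ B := fun X =>
    ⟨ρ X * ‖g‖, fun x hx => by
      rw [norm_smul, Real.norm_of_nonneg (hρ0 x).le]
      exact mul_le_mul (hρm hx) (g.norm_coe_le_norm x) (norm_nonneg _) (hρ0 X).le⟩
  have hint (g : BoundedContinuousFunction ℝ E) (x : ℝ) :
      IntegrableOn (fun y => K y (ρ y • g y)) (Iic x) :=
    integrableOn_Iic_comp_of_lipschitz hw hK0 hKL hKm (hscale g) (hscaleb g) x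
  have hwρ (x : ℝ) : IntegrableOn (fun y => w y * ρ y) (Iic x) :=
    integrableOn_Iic_mul_of_bound hw hρc (expWeight_bound hw0 hw) x
  have hdiff (g h : BoundedContinuousFunction ℝ E) (x : ℝ) :
      ‖(∫ y in Iic x, K y (ρ y • g y)) - ∫ y in Iic x, K y (ρ y • h y)‖ ≤
        ρ x * (dist g h / 2) := by
    rw [← integral_sub (hint g x) (hint h x)]
    have h1 : ‖∫ y in Iic x, (K y (ρ y • g y) - K y (ρ y • h y))‖ ≤
        ∫ y in Iic x, (w y * ρ y) * dist g h := by
      refine norm_integral_le_of_norm_le ((hwρ x).mul_const _) (ae_of_all _ fun y => ?_)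
      refine (hKL y _ _).trans ?_
      rw [← smul_sub, norm_smul, Real.norm_of_nonneg (hρ0 y).le, ← mul_assoc, ← dist_eq_norm]
      exact mul_le_mul_of_nonneg_left (BoundedContinuousFunction.dist_coe_le_dist y)
        (mul_nonneg (hw0 y) (hρ0 y).le)
    rw [integral_mul_const] at h1
    have h2 := mul_le_mul_of_nonneg_right (integral_mul_expWeight_le hw0 hw x)
      (dist_nonneg (x := g) (y := h))
    linarith
  let T (g : BoundedContinuousFunction ℝ E) : BoundedContinuousFunction ℝ E :=
    BoundedContinuousFunction.ofNormedAddCommGroup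
      (fun x => (ρ x)⁻¹ • (Y₀ + ∫ y in Iic x, K y (ρ y • g y)))
      ((hρc.inv₀ fun x => (hρ0 x).ne').smul
        (continuous_const.add (continuous_integral_Iic (hint g))))
      (‖Y₀‖ + dist g 0 / 2) (fun x => by
        have h1 := hdiff g 0 x
        simp only [BoundedContinuousFunction.coe_zero, Pi.zero_apply, smul_zero, hK0,
          integral_zero, sub_zero] at h1
        rw [norm_smul, norm_inv, Real.norm_of_nonneg (hρ0 x).le, inv_mul_le_iff₀ (hρ0 x)]
        have h2 := norm_add_le Y₀ (∫ y in Iic x, K y (ρ y • g y))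
        have h3 := le_mul_of_one_le_left (norm_nonneg Y₀) (hρ1 x)
        linarith)
  have hT : ContractingWith (1 / 2) T := by
    refine ⟨by rw [← NNReal.coe_lt_coe]; norm_num, LipschitzWith.of_dist_le_mul fun g h => ?_⟩
    refine (BoundedContinuousFunction.dist_le (by positivity)).2 fun x => ?_
    change dist ((ρ x)⁻¹ • (Y₀ + ∫ y in Iic x, K y (ρ y • g y)))
      ((ρ x)⁻¹ • (Y₀ + ∫ y in Iic x, K y (ρ y • h y))) ≤ _
    rw [dist_eq_norm, ← smul_sub, add_sub_add_left_eq_sub, norm_smul, norm_inv,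
      Real.norm_of_nonneg (hρ0 x).le, inv_mul_le_iff₀ (hρ0 x)]
    refine (hdiff g h x).trans_eq ?_
    push_cast
    ring
  set g := hT.fixedPoint T with hg
  refine ⟨fun x => ρ x • g x, hscale g, hscaleb g, fun x => ?_⟩
  have hfix : g x = (ρ x)⁻¹ • (Y₀ + ∫ y in Iic x, K y (ρ y • g y)) :=
    (DFunLike.congr_fun hT.fixedPoint_isFixedPt x).symm
  simp only
  rw [hfix, smul_inv_smul₀ (hρ0 x).ne']

/-- Solutions of the Volterra equation that are bounded on left half-lines are unique. -/
theorem eq_of_eq_add_integral_Iic [NormedSpace ℝ E]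
    (hw0 : ∀ y, 0 ≤ w y) (hw : ∀ x, IntegrableOn w (Iic x))
    (hK0 : ∀ y, K y 0 = 0) (hKL : ∀ y a b, ‖K y a - K y b‖ ≤ w y * ‖a - b‖)
    (hKm : ∀ Y : ℝ → E, Continuous Y → AEStronglyMeasurable (fun y => K y (Y y))) {Y₀ : E}
    {Y Z : ℝ → E} (hY : Continuous Y) (hYb : ∀ X, ∃ B, ∀ x ≤ X, ‖Y x‖ ≤ B)
    (hYe : ∀ x, Y x = Y₀ + ∫ y in Iic x, K y (Y y))
    (hZ : Continuous Z) (hZb : ∀ X, ∃ B, ∀ x ≤ X, ‖Z x‖ ≤ B)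
    (hZe : ∀ x, Z x = Y₀ + ∫ y in Iic x, K y (Z y)) : Y = Z := by
  have hb : ∀ X, ∃ B, ∀ x ≤ X, |‖Y x - Z x‖| ≤ B := fun X => by
    obtain ⟨B, hB⟩ := hYb X
    obtain ⟨B', hB'⟩ := hZb X
    refine ⟨B + B', fun x hx => ?_⟩
    rw [abs_norm]
    exact (norm_sub_le _ _).trans (add_le_add (hB x hx) (hB' x hx))
  have hc : Continuous fun x => ‖Y x - Z x‖ := (hY.sub hZ).norm
  funext x
  have := le_expWeight_of_le_add_integral (C := 0) hw0 hw hc (fun x => norm_nonneg _) le_rfl hb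
    (fun x => by
      rw [hYe x, hZe x, add_sub_add_left_eq_sub,
        ← integral_sub (integrableOn_Iic_comp_of_lipschitz hw hK0 hKL hKm hY hYb x)
          (integrableOn_Iic_comp_of_lipschitz hw hK0 hKL hKm hZ hZb x), zero_add]
      exact norm_integral_le_of_norm_le (integrableOn_Iic_mul_of_bound hw hc hb x)
        (ae_of_all _ fun y => hKL y _ _)) x
  simp only [mul_zero, zero_mul] at this
  exact sub_eq_zero.1 (norm_le_zero_iff.1 this)

end Picard


theorem absolutelyContinuousOnInterval_integral {E : Type*} [NormedAddCommGroup E]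
    [NormedSpace ℝ E] {f : ℝ → E} (hf : ∀ a b, IntervalIntegrable f volume a b) (a b : ℝ) :
    AbsolutelyContinuousOnInterval (fun x => ∫ y in a..x, f y) a b := by
  have h := (hf a b).norm.absolutelyContinuousOnInterval_intervalIntegral (c := a) left_mem_uIcc
  refine squeeze_zero (fun t => Finset.sum_nonneg fun i _ => dist_nonneg)
    (fun t => Finset.sum_le_sum fun i _ => ?_) h
  rw [dist_eq_norm, dist_eq_norm, intervalIntegral.integral_interval_sub_left (hf _ _) (hf _ _),
    intervalIntegral.integral_interval_sub_left (hf _ _).norm (hf _ _).norm, Real.norm_eq_abs]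
  exact intervalIntegral.norm_integral_le_abs_integral_norm

/-- The product rule in integrated form for complex-valued primitives of locally integrable
functions. -/
theorem mul_eq_add_integral_of_eq_add_integral {f g f' g' : ℝ → ℂ}
    (hf' : ∀ a b, IntervalIntegrable f' volume a b) (hg' : ∀ a b, IntervalIntegrable g' volume a b)
    (hf : ∀ x, f x = f 0 + ∫ y in (0 : ℝ)..x, f' y)
    (hg : ∀ x, g x = g 0 + ∫ y in (0 : ℝ)..x, g' y) (x : ℝ) :
    f x * g x = f 0 * g 0 + ∫ y in (0 : ℝ)..x, (f' y * g y + f y * g' y) := by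
  have key : ∀ {h h' : ℝ → ℂ}, (∀ a b, IntervalIntegrable h' volume a b) →
      (∀ x, h x = h 0 + ∫ y in (0 : ℝ)..x, h' y) →
      AbsolutelyContinuousOnInterval h 0 x ∧ Continuous h ∧
        ∀ᵐ y, y ∈ uIcc 0 x → HasDerivAt h (h' y) y := by
    intro h h' hi he
    have he' : h = fun x => h 0 + ∫ y in (0 : ℝ)..x, h' y := funext he
    refine ⟨?_, ?_, ?_⟩
    · have h1 := absolutelyContinuousOnInterval_integral hi 0 x
      have h2 : AbsolutelyContinuousOnInterval (fun _ : ℝ => h 0) 0 x :=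
        (LipschitzWith.const (h 0)).lipschitzOnWith.absolutelyContinuousOnInterval
      rw [he']
      exact h2.add h1
    · rw [he']
      exact continuous_const.add (intervalIntegral.continuous_primitive hi 0)
    · filter_upwards [(hi 0 x).ae_hasDerivAt_integral] with y hy hmem
      rw [he']
      exact (hy hmem 0 left_mem_uIcc).const_add _
  obtain ⟨fac, fc, fd⟩ := key hf' hf
  obtain ⟨gac, gc, gd⟩ := key hg' hg
  have hi : ∀ a b, IntervalIntegrable (fun y => f' y * g y + f y * g' y) volume a b := fun a b =>
    ((hf' a b).mul_continuousOn gc.continuousOn).add ((hg' a b).continuousOn_mul fc.continuousOn)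
  have hac : AbsolutelyContinuousOnInterval
      (f • g - fun x => ∫ y in (0 : ℝ)..x, (f' y * g y + f y * g' y)) 0 x :=
    (fac.smul gac).sub (absolutelyContinuousOnInterval_integral hi 0 x)
  obtain ⟨C, hC⟩ := hac.const_of_ae_hasDerivAt_zero (by
    filter_upwards [fd, gd, (hi 0 x).ae_hasDerivAt_integral] with y h1 h2 h3 hmem
    have := ((h1 hmem).mul (h2 hmem)).sub (h3 hmem 0 left_mem_uIcc)
    rwa [sub_self] at this)
  have h0 := hC 0 left_mem_uIcc
  have hx := hC x right_mem_uIcc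
  simp only [Pi.sub_apply, smul_eq_mul, Pi.mul_apply, intervalIntegral.integral_same,
    sub_zero] at h0 hx
  rw [h0, ← hx]
  ring

/-- The phase `exp (2 i k y)`. -/
noncomputable def phase (k y : ℝ) : ℂ := Complex.exp (2 * I * k * y)

theorem continuous_phase (k : ℝ) : Continuous (phase k) := by
  unfold phase
  fun_prop

@[simp]
theorem norm_phase (k y : ℝ) : ‖phase k y‖ = 1 := by
  have : 2 * I * (k : ℂ) * (y : ℂ) = ((2 * k * y : ℝ) : ℂ) * I := by
    push_cast
    ring
  rw [phase, this, Complex.norm_exp_ofReal_mul_I]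

theorem phase_mul_phase_neg (k y : ℝ) : phase k y * phase (-k) y = 1 := by
  rw [phase, phase, ← Complex.exp_add]
  simp

theorem exp_sub_eq_phase_mul (k x y : ℝ) :
    Complex.exp (2 * I * (k : ℂ) * ((x : ℂ) - (y : ℂ))) = phase k x * phase (-k) y := by
  rw [phase, phase, ← Complex.exp_add]
  push_cast
  ring_nf

theorem phase_eq_add_integral (k x : ℝ) :
    phase k x = phase k 0 + ∫ y in (0 : ℝ)..x, 2 * I * k * phase k y := by
  have hd : ∀ y : ℝ, HasDerivAt (phase k) (2 * I * k * phase k y) y := fun y => by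
    have h := ((Complex.ofRealCLM.hasDerivAt (x := y)).const_mul (2 * I * (k : ℂ))).cexp
    simp only [ofRealCLM_apply, ofReal_one, mul_one] at h
    rw [mul_comm (2 * I * (k : ℂ))]
    exact h
  rw [intervalIntegral.integral_eq_sub_of_hasDerivAt (fun y _ => hd y)
    ((continuous_const.mul (continuous_phase k)).intervalIntegrable _ _)]
  ring

/-- The right-hand side of the first-order system solved by the Jost functions in the variables
`(ψ₁, e^{-2ikx} (ψ₃ - c ψ₁))`. -/
noncomputable def jostField (c : ℂ) (k : ℝ) (q p : ℝ → ℂ) (y : ℝ) (Z : ℂ × ℂ) : ℂ × ℂ :=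
  (q y * (phase k y * Z.2 + c * Z.1),
    phase (-k) y * (p y * Z.1 - c * (q y * (phase k y * Z.2 + c * Z.1))))

theorem norm_jostField_sub_le (c : ℂ) (k : ℝ) (q p : ℝ → ℂ) (y : ℝ) (Z W : ℂ × ℂ) :
    ‖jostField c k q p y Z - jostField c k q p y W‖ ≤
      ((1 + ‖c‖) ^ 2 * (‖q y‖ + ‖p y‖)) * ‖Z - W‖ := by
  have h1 : ‖Z.1 - W.1‖ ≤ ‖Z - W‖ := norm_fst_le (Z - W)
  have h2 : ‖Z.2 - W.2‖ ≤ ‖Z - W‖ := norm_snd_le (Z - W)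
  set d := ‖Z - W‖
  have hd : 0 ≤ d := norm_nonneg _
  have hc : 0 ≤ ‖c‖ := norm_nonneg _
  have hq : 0 ≤ ‖q y‖ := norm_nonneg _
  have hp : 0 ≤ ‖p y‖ := norm_nonneg _
  have hv : ‖phase k y * (Z.2 - W.2) + c * (Z.1 - W.1)‖ ≤ (1 + ‖c‖) * d := by
    refine (norm_add_le _ _).trans ?_
    rw [norm_mul, norm_mul, norm_phase]
    nlinarith
  have hqv : ‖q y * (phase k y * (Z.2 - W.2) + c * (Z.1 - W.1))‖ ≤ ‖q y‖ * ((1 + ‖c‖) * d) := by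
    rw [norm_mul]
    exact mul_le_mul_of_nonneg_left hv hq
  rw [Prod.norm_def]
  refine max_le ?_ ?_
  · have : (jostField c k q p y Z - jostField c k q p y W).1 =
        q y * (phase k y * (Z.2 - W.2) + c * (Z.1 - W.1)) := by
      simp only [jostField, Prod.fst_sub]
      ring
    rw [this]
    refine hqv.trans ?_
    have : 0 ≤ (1 + ‖c‖) ^ 2 * ‖p y‖ * d := by positivity
    have : 0 ≤ ‖c‖ * (1 + ‖c‖) * ‖q y‖ * d := by positivity
    linarith
  · have : (jostField c k q p y Z - jostField c k q p y W).2 =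
        phase (-k) y * (p y * (Z.1 - W.1) -
          c * (q y * (phase k y * (Z.2 - W.2) + c * (Z.1 - W.1)))) := by
      simp only [jostField, Prod.snd_sub]
      ring
    rw [this, norm_mul, norm_phase, one_mul]
    refine (norm_sub_le _ _).trans ?_
    rw [norm_mul, norm_mul c]
    have e1 := mul_le_mul_of_nonneg_left h1 hp
    have e2 := mul_le_mul_of_nonneg_left hqv hc
    have : 0 ≤ (2 * ‖c‖ + ‖c‖ ^ 2) * ‖p y‖ * d := by positivity
    have : 0 ≤ (1 + ‖c‖) * ‖q y‖ * d := by positivity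
    linarith

theorem jostField_zero (c : ℂ) (k : ℝ) (q p : ℝ → ℂ) (y : ℝ) : jostField c k q p y 0 = 0 := by
  simp [jostField]

theorem aestronglyMeasurable_jostField (c : ℂ) (k : ℝ) {q p : ℝ → ℂ} (hq : Measurable q)
    (hp : Measurable p) (Y : ℝ → ℂ × ℂ) (hY : Continuous Y) :
    AEStronglyMeasurable (fun y => jostField c k q p y (Y y)) := by
  have h1 := (continuous_phase k).measurable
  have h2 := (continuous_phase (-k)).measurable
  have h3 : Measurable fun y => (Y y).1 := hY.fst.measurable
  have h4 : Measurable fun y => (Y y).2 := hY.snd.measurable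
  have hv : Measurable fun y => q y * (phase k y * (Y y).2 + c * (Y y).1) :=
    hq.mul ((h1.mul h4).add (h3.const_mul c))
  exact (hv.prodMk (h2.mul ((hp.mul h3).sub (hv.const_mul c)))).aestronglyMeasurable

/-- If `q - 2ikc` and `r` are integrable on the right half-line, then solutions of the Jost system
with coefficients `q` and `2ikc - r` are bounded there. -/
theorem exists_bound_of_jost_system {c : ℂ} {k : ℝ} {q r u s : ℝ → ℂ}
    (hq : ∀ a b, IntervalIntegrable q volume a b) (hr : ∀ a b, IntervalIntegrable r volume a b)
    (hqI : IntegrableOn (fun y => q y - 2 * I * k * c) (Ici 0)) (hrI : IntegrableOn r (Ici 0))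
    (hu : Continuous u) (hs : Continuous s)
    (hue : ∀ x, u x = u 0 + ∫ y in (0 : ℝ)..x, q y * (phase k y * s y + c * u y))
    (hse : ∀ x, s x = s 0 + ∫ y in (0 : ℝ)..x, phase (-k) y *
      ((2 * I * k * c - r y) * u y - c * (q y * (phase k y * s y + c * u y)))) :
    ∃ B, ∀ x, 0 ≤ x → ‖u x‖ ≤ B ∧ ‖s x‖ ≤ B := by
  have hp := continuous_phase k
  have hn := continuous_phase (-k)
  have hpn := phase_mul_phase_neg k
  set v : ℝ → ℂ := fun y => phase k y * s y + c * u y with hv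
  have hvc : Continuous v := (hp.mul hs).add (continuous_const.mul hu)
  have hqv : ∀ a b, IntervalIntegrable (fun y => q y * v y) volume a b := fun a b =>
    (hq a b).mul_continuousOn hvc.continuousOn
  have hru : ∀ a b, IntervalIntegrable (fun y => r y * u y) volume a b := fun a b =>
    (hr a b).mul_continuousOn hu.continuousOn
  have hui : ∀ (b : ℂ) (a d : ℝ), IntervalIntegrable (fun y => b * u y) volume a d :=
    fun b a d => (continuous_const.mul hu).intervalIntegrable _ _
  have hsi : ∀ a b, IntervalIntegrable (fun y => phase (-k) y *
      ((2 * I * k * c - r y) * u y - c * (q y * v y))) volume a b := fun a b => by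
    refine IntervalIntegrable.continuousOn_mul ?_ hn.continuousOn
    refine IntervalIntegrable.sub ?_ ((hqv a b).const_mul c)
    simp_rw [sub_mul]
    exact (hui _ a b).sub (hru a b)
  set h : ℝ → ℂ := fun y => s y + c * (phase (-k) y * u y) with hh
  have hhc : Continuous h := hs.add (continuous_const.mul (hn.mul hu))
  have hvh : ∀ y, phase k y * h y = v y := fun y => by
    simp only [hh, hv]
    linear_combination c * u y * hpn y
  have hni : ∀ a b, IntervalIntegrable (fun y => 2 * I * ((-k : ℝ) : ℂ) * phase (-k) y)
      volume a b := fun a b => (continuous_const.mul hn).intervalIntegrable _ _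
  have hpi : ∀ a b, IntervalIntegrable (fun y => 2 * I * (k : ℂ) * phase k y)
      volume a b := fun a b => (continuous_const.mul hp).intervalIntegrable _ _
  have hhi : ∀ a b, IntervalIntegrable (fun y => -(phase (-k) y * (r y * u y))) volume a b :=
    fun a b => ((hru a b).continuousOn_mul hn.continuousOn).neg
  have hhe : ∀ x, h x = h 0 + ∫ y in (0 : ℝ)..x, -(phase (-k) y * (r y * u y)) := fun x => by
    have h1 := mul_eq_add_integral_of_eq_add_integral hni hqv (phase_eq_add_integral (-k)) hue x
    have h2 : IntervalIntegrable (fun y => 2 * I * ((-k : ℝ) : ℂ) * phase (-k) y * u y +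
        phase (-k) y * (q y * v y)) volume 0 x :=
      ((hni 0 x).mul_continuousOn hu.continuousOn).add
        ((hqv 0 x).continuousOn_mul hn.continuousOn)
    have h3 : (∫ y in (0 : ℝ)..x, phase (-k) y *
        ((2 * I * k * c - r y) * u y - c * (q y * v y))) +
        c * ∫ y in (0 : ℝ)..x, (2 * I * ((-k : ℝ) : ℂ) * phase (-k) y * u y +
          phase (-k) y * (q y * v y)) =
        ∫ y in (0 : ℝ)..x, -(phase (-k) y * (r y * u y)) := by
      rw [← intervalIntegral.integral_const_mul,
        ← intervalIntegral.integral_add (hsi 0 x) (h2.const_mul c)]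
      refine intervalIntegral.integral_congr fun y _ => ?_
      push_cast
      ring
    rw [← h3]
    simp only [hh]
    rw [hse x, h1]
    ring
  set φ : ℝ → ℂ := fun y => u y - c * v y with hφ
  have hφc : Continuous φ := hu.sub (continuous_const.mul hvc)
  have hφi : ∀ a b, IntervalIntegrable
      (fun y => (q y - 2 * I * k * c) * v y + c * (r y * u y)) volume a b := fun a b => by
    refine IntervalIntegrable.add ?_ ((hru a b).const_mul c)
    exact ((hq a b).sub intervalIntegrable_const).mul_continuousOn hvc.continuousOn
  have hφe : ∀ x, φ x = φ 0 +
      ∫ y in (0 : ℝ)..x, ((q y - 2 * I * k * c) * v y + c * (r y * u y)) := fun x => by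
    have h1 := mul_eq_add_integral_of_eq_add_integral hpi hhi (phase_eq_add_integral k) hhe x
    simp only [hvh] at h1
    have h2 : IntervalIntegrable (fun y => 2 * I * (k : ℂ) * phase k y * h y +
        phase k y * -(phase (-k) y * (r y * u y))) volume 0 x :=
      ((hpi 0 x).mul_continuousOn hhc.continuousOn).add
        ((hhi 0 x).continuousOn_mul hp.continuousOn)
    have h3 : (∫ y in (0 : ℝ)..x, q y * v y) -
        c * ∫ y in (0 : ℝ)..x, (2 * I * (k : ℂ) * phase k y * h y +
          phase k y * -(phase (-k) y * (r y * u y))) =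
        ∫ y in (0 : ℝ)..x, ((q y - 2 * I * k * c) * v y + c * (r y * u y)) := by
      rw [← intervalIntegral.integral_const_mul,
        ← intervalIntegral.integral_sub (hqv 0 x) (h2.const_mul c)]
      refine intervalIntegral.integral_congr fun y _ => ?_
      linear_combination -(c * 2 * I * k) * hvh y + c * (r y * u y) * hpn y
    rw [← h3]
    simp only [hφ]
    rw [hue x, h1]
    ring
  set N : ℝ → ℝ := fun x => ‖φ x‖ + ‖h x‖ with hN
  have hN0 : ∀ x, 0 ≤ N x := fun x => by positivity
  have hNc : Continuous N := hφc.norm.add hhc.norm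
  have hvn : ∀ y, ‖v y‖ = ‖h y‖ := fun y => by rw [← hvh, norm_mul, norm_phase, one_mul]
  have huN : ∀ y, ‖u y‖ ≤ (1 + ‖c‖) * N y := fun y => by
    have h1 : u y = φ y + c * v y := by simp only [hφ]; ring
    have h2 : ‖u y‖ ≤ ‖φ y‖ + ‖c‖ * ‖h y‖ := by
      rw [h1, ← hvn, ← norm_mul]
      exact norm_add_le _ _
    have := norm_nonneg c
    have := norm_nonneg (φ y)
    have := norm_nonneg (h y)
    simp only [hN]
    nlinarith
  set ω : ℝ → ℝ := (Ici (0 : ℝ)).indicator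
    fun y => ‖q y - 2 * I * k * c‖ + (1 + ‖c‖) ^ 2 * ‖r y‖ with hω
  have hω0 : ∀ y, 0 ≤ ω y := indicator_nonneg fun y _ => by positivity
  have hωi : Integrable ω :=
    (integrable_indicator_iff measurableSet_Ici).2 (hqI.norm.add (hrI.norm.const_mul _))
  have hgron : ∀ x, N (max x 0) ≤ N 0 + ∫ y in Iic x, ω y * N (max y 0) := fun x => by
    rcases lt_or_ge x 0 with hx | hx
    · rw [max_eq_right hx.le]
      exact le_add_of_nonneg_right (integral_nonneg fun y => mul_nonneg (hω0 y) (hN0 _))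
    rw [max_eq_left hx]
    have hsub : ∫ y in (0 : ℝ)..x, ω y * N (max y 0) ≤ ∫ y in Iic x, ω y * N (max y 0) := by
      rw [intervalIntegral.integral_of_le hx]
      refine setIntegral_mono_set ?_ (ae_of_all _ fun y => mul_nonneg (hω0 y) (hN0 _))
        Ioc_subset_Iic_self.eventuallyLE
      refine integrableOn_Iic_mul_of_bound (fun _ => hωi.integrableOn)
        (hNc.comp (continuous_id.max continuous_const)) (fun X => ?_) x
      obtain ⟨B, hB⟩ := isCompact_Icc.exists_bound_of_continuousOn
        (s := Icc 0 (max X 0)) hNc.continuousOn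
      exact ⟨B, fun y hy => hB _ ⟨le_max_right _ _, max_le_max_right 0 hy⟩⟩
    have hωN : IntervalIntegrable (fun y => ω y * N (max y 0)) volume 0 x :=
      hωi.intervalIntegrable.mul_continuousOn
        (hNc.comp (continuous_id.max continuous_const)).continuousOn
    have hpt : (∫ y in (0 : ℝ)..x, ‖(q y - 2 * I * k * c) * v y + c * (r y * u y)‖) +
        ∫ y in (0 : ℝ)..x, ‖-(phase (-k) y * (r y * u y))‖ ≤
        ∫ y in (0 : ℝ)..x, ω y * N (max y 0) := by
      rw [← intervalIntegral.integral_add (hφi 0 x).norm (hhi 0 x).norm]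
      refine intervalIntegral.integral_mono_on hx ((hφi 0 x).norm.add (hhi 0 x).norm) hωN
        fun y hy => ?_
      have hω1 : ω y = ‖q y - 2 * I * k * c‖ + (1 + ‖c‖) ^ 2 * ‖r y‖ :=
        indicator_of_mem (s := Ici (0 : ℝ)) hy.1 _
      rw [hω1, max_eq_left hy.1, norm_neg, norm_mul (phase (-k) y), norm_phase, one_mul]
      have e1 := norm_add_le ((q y - 2 * I * k * c) * v y) (c * (r y * u y))
      rw [norm_mul, norm_mul, norm_mul, hvn] at e1
      rw [norm_mul (r y)]
      have e2 : ‖h y‖ ≤ N y := le_add_of_nonneg_left (norm_nonneg _)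
      have e3 := mul_le_mul_of_nonneg_left e2 (norm_nonneg (q y - 2 * I * k * c))
      have e4 := mul_le_mul_of_nonneg_left (huN y)
        (mul_nonneg (add_nonneg zero_le_one (norm_nonneg c)) (norm_nonneg (r y)))
      linarith
    have h1 : ‖φ x‖ ≤ ‖φ 0‖ +
        ∫ y in (0 : ℝ)..x, ‖(q y - 2 * I * k * c) * v y + c * (r y * u y)‖ := by
      rw [hφe x]
      exact (norm_add_le _ _).trans
        (by gcongr; exact intervalIntegral.norm_integral_le_integral_norm hx)
    have h2 : ‖h x‖ ≤ ‖h 0‖ + ∫ y in (0 : ℝ)..x, ‖-(phase (-k) y * (r y * u y))‖ := by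
      rw [hhe x]
      exact (norm_add_le _ _).trans
        (by gcongr; exact intervalIntegral.norm_integral_le_integral_norm hx)
    simp only [hN] at hsub hpt ⊢
    linarith
  have hbound : ∀ x, 0 ≤ x → N x ≤ 2 * N 0 * Real.exp (2 * ∫ y, ω y) := fun x hx => by
    have h1 := le_expWeight_of_le_add_integral hω0 (fun _ => hωi.integrableOn)
      (hNc.comp (continuous_id.max continuous_const)) (fun x => hN0 _) (hN0 0) (fun X => by
        obtain ⟨B, hB⟩ := isCompact_Icc.exists_bound_of_continuousOn
          (s := Icc 0 (max X 0)) hNc.continuousOn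
        exact ⟨B, fun y hy => hB _ ⟨le_max_right _ _, max_le_max_right 0 hy⟩⟩) hgron x
    simp only [Function.comp, id, max_eq_left hx] at h1
    exact h1.trans (mul_le_mul_of_nonneg_left (expWeight_le hω0 hωi x)
      (mul_nonneg zero_le_two (hN0 0)))
  set B := 2 * N 0 * Real.exp (2 * ∫ y, ω y)
  have hc : 0 ≤ ‖c‖ := norm_nonneg c
  refine ⟨(1 + ‖c‖) ^ 2 * B, fun x hx => ?_⟩
  have hB := hbound x hx
  have hB0 : 0 ≤ B := (hN0 x).trans hB
  have h1 := (huN x).trans (mul_le_mul_of_nonneg_left hB (by positivity : 0 ≤ 1 + ‖c‖))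
  constructor
  · have : 0 ≤ ‖c‖ * (1 + ‖c‖) * B := by positivity
    linarith
  · have e1 : s x = h x - c * (phase (-k) x * u x) := by simp only [hh]; ring
    have e2 : ‖s x‖ ≤ ‖h x‖ + ‖c‖ * ‖u x‖ := by
      rw [e1]
      refine (norm_sub_le _ _).trans_eq ?_
      rw [norm_mul, norm_mul, norm_phase, one_mul]
    have e3 : ‖h x‖ ≤ B := (le_add_of_nonneg_left (norm_nonneg _)).trans hB
    have e4 := mul_le_mul_of_nonneg_left h1 hc
    have : 0 ≤ ‖c‖ * B := by positivity
    linarith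

theorem integrableOn_Iic_of_sub_const {f : ℝ → ℂ} {a : ℂ} (h₁ : IntegrableOn f (Iic 0))
    (h₂ : IntegrableOn (fun y => f y - a) (Ici 0)) (x : ℝ) : IntegrableOn f (Iic x) := by
  have h : IntegrableOn f (Icc 0 x) := by
    have := (h₂.mono_set (Icc_subset_Ici_self : Icc 0 x ⊆ Ici 0)).add
      (integrableOn_const (μ := volume) (s := Icc 0 x) (C := a) (by simp))
    refine this.congr_fun (fun y _ => ?_) measurableSet_Icc
    simp
  refine (h₁.union h).mono_set fun y hy => ?_
  rcases le_total y 0 with h0 | h0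
  · exact Or.inl h0
  · exact Or.inr ⟨h0, hy⟩

theorem integrableOn_conj_comp_neg {f : ℝ → ℂ} {S : Set ℝ} (hf : IntegrableOn f S) :
    IntegrableOn (fun y => (starRingEnd ℂ) (f (-y))) (Neg.neg ⁻¹' S) := by
  have h := ((Measure.measurePreserving_neg (volume : Measure ℝ)).integrableOn_comp_preimage
    (Homeomorph.neg ℝ).measurableEmbedding).2 hf
  exact (Complex.conjCLE : ℂ →L[ℝ] ℂ).integrable_comp h

theorem jost_rhs_eq {c : ℂ} {k : ℝ} {q p u v : ℝ → ℂ} {x : ℝ}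
    (hpu : IntegrableOn (fun y => p y * u y) (Iic x))
    (hqv : IntegrableOn (fun y => q y * v y) (Iic x)) :
    c + (∫ y in Iic x, Complex.exp (2 * I * (k : ℂ) * ((x : ℂ) - (y : ℂ))) * p y * u y) +
      c * ∫ y in Iic x, q y * (1 - Complex.exp (2 * I * (k : ℂ) * ((x : ℂ) - (y : ℂ)))) * v y =
    c * (1 + ∫ y in Iic x, q y * v y) +
      phase k x * ∫ y in Iic x, phase (-k) y * (p y * u y - c * (q y * v y)) := by
  have hphase {f : ℝ → ℂ} (hf : IntegrableOn f (Iic x)) :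
      IntegrableOn (fun y => phase (-k) y * f y) (Iic x) :=
    Integrable.bdd_mul (c := 1) hf.integrable (continuous_phase (-k)).aestronglyMeasurable
      (ae_of_all _ fun y => (norm_phase (-k) y).le)
  simp_rw [exp_sub_eq_phase_mul]
  have e1 : ∫ y in Iic x, phase k x * phase (-k) y * p y * u y =
      phase k x * ∫ y in Iic x, phase (-k) y * (p y * u y) := by
    rw [← integral_const_mul]
    congr 1
    funext y
    ring
  have e2 : ∫ y in Iic x, q y * (1 - phase k x * phase (-k) y) * v y =
      (∫ y in Iic x, q y * v y) - phase k x * ∫ y in Iic x, phase (-k) y * (q y * v y) := by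
    rw [← integral_const_mul, ← integral_sub hqv ((hphase hqv).const_mul _)]
    congr 1
    funext y
    ring
  have e3 : ∫ y in Iic x, phase (-k) y * (p y * u y - c * (q y * v y)) =
      (∫ y in Iic x, phase (-k) y * (p y * u y)) -
        c * ∫ y in Iic x, phase (-k) y * (q y * v y) := by
    rw [← integral_const_mul, ← integral_sub (hphase hpu) ((hphase hqv).const_mul _)]
    congr 1
    funext y
    ring
  rw [e1, e2, e3]
  ring

/-- The Jost integral equations are equivalent to the first-order system given by `jostField`. -/
theorem jost_equations_iff {c : ℂ} {k : ℝ} {q p u s v : ℝ → ℂ}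
    (hv : ∀ y, v y = phase k y * s y + c * u y)
    (hF : ∀ x, IntegrableOn (fun y => jostField c k q p y (u y, s y)) (Iic x))
    (hpu : ∀ x, IntegrableOn (fun y => p y * u y) (Iic x)) :
    (∀ x, (u x, s x) = ((1 : ℂ), (0 : ℂ)) + ∫ y in Iic x, jostField c k q p y (u y, s y)) ↔
      (∀ x, u x = 1 + ∫ y in Iic x, q y * v y) ∧
      ∀ x, v x = c +
        (∫ y in Iic x, Complex.exp (2 * I * (k : ℂ) * ((x : ℂ) - (y : ℂ))) * p y * u y) +
        c * ∫ y in Iic x, q y * (1 - Complex.exp (2 * I * (k : ℂ) * ((x : ℂ) - (y : ℂ)))) * v y := by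
  have hqv : ∀ x, IntegrableOn (fun y => q y * v y) (Iic x) := fun x => by
    simp_rw [hv]
    exact (hF x).fst
  have hsys : ∀ x, ((u x, s x) = ((1 : ℂ), (0 : ℂ)) +
      ∫ y in Iic x, jostField c k q p y (u y, s y)) ↔
      u x = 1 + (∫ y in Iic x, q y * v y) ∧
      s x = ∫ y in Iic x, phase (-k) y * (p y * u y - c * (q y * v y)) := fun x => by
    simp_rw [hv]
    rw [Prod.ext_iff, Prod.fst_add, Prod.snd_add, fst_integral (hF x), snd_integral (hF x),
      zero_add]
    rfl
  rw [← forall_and]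
  refine forall_congr' fun x => ?_
  rw [hsys, jost_rhs_eq (hpu x) (hqv x)]
  refine and_congr_right fun h => ?_
  rw [← h, hv x]
  constructor
  · intro h'
    rw [← h']
    ring
  · intro h'
    have h1 : phase k x * s x =
        phase k x * ∫ y in Iic x, phase (-k) y * (p y * u y - c * (q y * v y)) := by
      linear_combination h'
    exact mul_left_cancel₀ (left_ne_zero_of_mul_eq_one (phase_mul_phase_neg k x)) h1

/-- Existence and uniqueness of bounded continuous solutions (ψ₁, ψ₃) of the Volterra
integral equations for the left Jost solution of the NNLS equation with step-like
initial datum q₀ (q₀ integrable at −∞, q₀ − A integrable at +∞), for each real k ≠ 0. -/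
theorem jost_volterra_existence_uniqueness (A : ℝ) (hA : 0 < A) (q₀ : ℝ → ℂ)
    (hmeas : Measurable q₀)
    (hintNeg : IntegrableOn q₀ (Set.Iic 0))
    (hintPos : IntegrableOn (fun y => q₀ y - (A : ℂ)) (Set.Ici 0))
    (k : ℝ) (hk : k ≠ 0) :
    ∃! p : (ℝ → ℂ) × (ℝ → ℂ),
      (Continuous p.1 ∧ Continuous p.2 ∧
        (∃ C : ℝ, ∀ x : ℝ, ‖p.1 x‖ ≤ C) ∧ (∃ C : ℝ, ∀ x : ℝ, ‖p.2 x‖ ≤ C)) ∧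
      (∀ x : ℝ,
        p.1 x = 1 + ∫ y in Set.Iic x, q₀ y * p.2 y) ∧
      (∀ x : ℝ,
        p.2 x = (A : ℂ) / (2 * I * k)
          + (∫ y in Set.Iic x,
              Complex.exp (2 * I * (k : ℂ) * ((x : ℂ) - (y : ℂ)))
                * ((A : ℂ) - (starRingEnd ℂ) (q₀ (-y))) * p.1 y)
          + ((A : ℂ) / (2 * I * k))
              * ∫ y in Set.Iic x,
                  q₀ y * (1 - Complex.exp (2 * I * (k : ℂ) * ((x : ℂ) - (y : ℂ))))
                    * p.2 y) := by
  set c : ℂ := (A : ℂ) / (2 * I * k) with hc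
  have hAc : 2 * I * k * c = (A : ℂ) := by
    rw [hc, mul_div_cancel₀]
    simp [hk]
  set r : ℝ → ℂ := fun y => (starRingEnd ℂ) (q₀ (-y)) with hr
  set p : ℝ → ℂ := fun y => (A : ℂ) - r y with hp
  have hpm : Measurable p :=
    measurable_const.sub (continuous_conj.measurable.comp (hmeas.comp measurable_neg))
  have hrI : IntegrableOn r (Ici 0) := by
    simpa [hr] using integrableOn_conj_comp_neg hintNeg
  have hpI : IntegrableOn p (Iic 0) := by
    have := (integrableOn_conj_comp_neg hintPos).neg
    simpa [hp, hr, Pi.neg_def] using this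
  have hq : ∀ x, IntegrableOn q₀ (Iic x) := integrableOn_Iic_of_sub_const hintNeg hintPos
  have hpi : ∀ x, IntegrableOn p (Iic x) := integrableOn_Iic_of_sub_const (a := A) hpI
    (by simpa [hp, Pi.neg_def] using hrI.neg)
  have hloc {f : ℝ → ℂ} (hf : ∀ x, IntegrableOn f (Iic x)) (a b : ℝ) :
      IntervalIntegrable f volume a b := by
    rw [intervalIntegrable_iff]
    exact (hf (max a b)).mono_set fun y hy => hy.2
  have hrloc : ∀ a b, IntervalIntegrable r volume a b := fun a b => by
    have := (intervalIntegrable_const (c := (A : ℂ))).sub (hloc hpi a b)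
    simpa [hp] using this
  set w : ℝ → ℝ := fun y => (1 + ‖c‖) ^ 2 * (‖q₀ y‖ + ‖p y‖) with hw
  have hw0 : ∀ y, 0 ≤ w y := fun y => by positivity
  have hwi : ∀ x, IntegrableOn w (Iic x) := fun x =>
    ((hq x).norm.add (hpi x).norm).const_mul _
  have hK0 := jostField_zero c k q₀ p
  have hKL := norm_jostField_sub_le c k q₀ p
  have hKm := aestronglyMeasurable_jostField c k hmeas hpm
  have hpu {u : ℝ → ℂ} (hu : Continuous u) (hb : ∀ X, ∃ B, ∀ x ≤ X, ‖u x‖ ≤ B) (x : ℝ) :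
      IntegrableOn (fun y => p y * u y) (Iic x) := by
    obtain ⟨B, hB⟩ := hb x
    refine Integrable.mul_bdd (c := B) (hpi x) hu.aestronglyMeasurable ?_
    filter_upwards [ae_restrict_mem measurableSet_Iic] with y hy using hB y hy
  obtain ⟨Y, hY, hYb, hYe⟩ := exists_eq_add_integral_Iic hw0 hwi hK0 hKL hKm ((1 : ℂ), (0 : ℂ))
  have hF := integrableOn_Iic_comp_of_lipschitz hwi hK0 hKL hKm hY hYb
  have hub : ∀ X, ∃ B, ∀ x ≤ X, ‖(Y x).1‖ ≤ B := fun X =>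
    (hYb X).imp fun B hB x hx => (norm_fst_le _).trans (hB x hx)
  set v : ℝ → ℂ := fun y => phase k y * (Y y).2 + c * (Y y).1 with hv
  have hYi : ∀ x, Y x = Y 0 + ∫ y in (0 : ℝ)..x, jostField c k q₀ p y (Y y) := fun x => by
    rw [← intervalIntegral.integral_Iic_sub_Iic (hF 0) (hF x)]
    linear_combination hYe x - hYe 0
  have hFi : ∀ x, IntervalIntegrable (fun y => jostField c k q₀ p y (Y y)) volume 0 x :=
    fun x => by
      rw [intervalIntegrable_iff]
      exact (hF (max 0 x)).mono_set fun y hy => hy.2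
  obtain ⟨B, hB⟩ := exists_bound_of_jost_system (c := c) (k := k) (hloc hq) hrloc
    (by simpa [hAc] using hintPos) hrI hY.fst hY.snd
    (fun x => by
      have := congrArg (ContinuousLinearMap.fst ℝ ℂ ℂ) (hYi x)
      rw [map_add, ← ContinuousLinearMap.intervalIntegral_comp_comm _ (hFi x)] at this
      exact this)
    (fun x => by
      have := congrArg (ContinuousLinearMap.snd ℝ ℂ ℂ) (hYi x)
      rw [map_add, ← ContinuousLinearMap.intervalIntegral_comp_comm _ (hFi x)] at this
      rw [hAc]
      exact this)
  obtain ⟨B', hB'⟩ := hYb 0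
  have hu : ∀ x, ‖(Y x).1‖ ≤ max B B' := fun x => by
    rcases le_total x 0 with hx | hx
    · exact ((norm_fst_le _).trans (hB' x hx)).trans (le_max_right _ _)
    · exact (hB x hx).1.trans (le_max_left _ _)
  have hs : ∀ x, ‖(Y x).2‖ ≤ max B B' := fun x => by
    rcases le_total x 0 with hx | hx
    · exact ((norm_snd_le _).trans (hB' x hx)).trans (le_max_right _ _)
    · exact (hB x hx).2.trans (le_max_left _ _)
  refine ⟨(fun x => (Y x).1, v), ⟨⟨hY.fst, ?_, ⟨_, hu⟩, max B B' + ‖c‖ * max B B', ?_⟩, ?_⟩, ?_⟩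
  · exact ((continuous_phase k).mul hY.snd).add (continuous_const.mul hY.fst)
  · intro x
    refine (norm_add_le _ _).trans ?_
    rw [norm_mul, norm_mul, norm_phase, one_mul]
    exact add_le_add (hs x) (mul_le_mul_of_nonneg_left (hu x) (norm_nonneg c))
  · exact (jost_equations_iff (fun y => rfl) hF (hpu hY.fst hub)).1 hYe
  rintro ⟨ψ₁, ψ₃⟩ ⟨⟨h₁, h₃, ⟨C₁, hC₁⟩, C₃, hC₃⟩, he⟩
  simp only at h₁ h₃ hC₁ hC₃ he
  set s : ℝ → ℂ := fun y => phase (-k) y * (ψ₃ y - c * ψ₁ y) with hsd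
  have hψ₃ : ∀ y, ψ₃ y = phase k y * s y + c * ψ₁ y := fun y => by
    simp only [hsd]
    linear_combination -(ψ₃ y - c * ψ₁ y) * phase_mul_phase_neg k y
  have hsc : Continuous s :=
    (continuous_phase (-k)).mul (h₃.sub (continuous_const.mul h₁))
  have hZb : ∀ X : ℝ, ∃ B, ∀ x ≤ X, ‖(ψ₁ x, s x)‖ ≤ B := fun _ =>
    ⟨max C₁ (C₃ + ‖c‖ * C₁), fun x _ => by
      refine max_le_max (hC₁ x) ?_
      simp only [hsd]
      rw [norm_mul, norm_phase, one_mul]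
      refine (norm_sub_le _ _).trans ?_
      rw [norm_mul]
      exact add_le_add (hC₃ x) (mul_le_mul_of_nonneg_left (hC₁ x) (norm_nonneg c))⟩
  have hZe := (jost_equations_iff hψ₃
    (integrableOn_Iic_comp_of_lipschitz hwi hK0 hKL hKm (h₁.prodMk hsc) hZb)
    (hpu h₁ fun _ => ⟨C₁, fun x _ => hC₁ x⟩)).2 he
  have hYZ := eq_of_eq_add_integral_Iic hw0 hwi hK0 hKL hKm (h₁.prodMk hsc) hZb hZe hY hYb hYe
  refine Prod.ext (funext fun x => ?_) (funext fun x => ?_)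
  · exact congrArg Prod.fst (congrFun hYZ x)
  · simp only [hv, ← hYZ]
    exact hψ₃ x
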